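/- Let n, m ≥ 1, let a < d be real numbers, and let B, B₁ : [a,d] → ℂ^{2n×2n} be continuous with B(x) and B₁(x) Hermitian for every x. Suppose X, Y : [a,d] → ℂ^{2n×m} are continuously differentiable and satisfy J X'(x) = B(x) X(x) and J Y'(x) = B₁(x) X(x) + B(x) Y(x) for all x ∈ [a,d] (the second equation is the formal λ-derivative of the first, with Y playing the role of ∂_λ X and B₁ the role of ∂_λ B). Then for every x ∈ [a,d], X(x)* J Y(x) = X(a)* J Y(a) + ∫_a^x X(ξ)* B₁(ξ) X(ξ) dξ; in particular, the derivative of x ↦ X(x)* J Y(x) equals X(x)* B₁(x) X(x), and if X(a)* J Y(a) is Hermitian then X(x)* J Y(x) is Hermitian for all x, and if additionally B₁(ξ) is positive semidefinite for all ξ then X(x)* J Y(x) − X(a)* J Y(a) is positive semidefinite for all x. -/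

import Mathlib

open Matrix MeasureTheory
open scoped ComplexOrder

/-- The standard `2n × 2n` complex symplectic matrix `J = [[0, -Iₙ],[Iₙ, 0]]`,
with `ℂ^{2n}` realized as functions on `Fin n ⊕ Fin n`. -/
noncomputable def symJ (n : ℕ) : Matrix (Fin n ⊕ Fin n) (Fin n ⊕ Fin n) ℂ :=
  Matrix.fromBlocks 0 (-1) 1 0

/-! Since `Jᴴ = -J`, the equation for `X` conjugates to `X'ᴴ J = -Xᴴ B`. In the derivative
`X'ᴴ J Y + Xᴴ J Y'` the terms `∓Xᴴ B Y` therefore cancel, which leaves `Xᴴ B₁ X`. Every claim about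
`Xᴴ J Y` is then one about the integral of `Xᴴ B₁ X`, because entrywise integration preserves
Hermitian and positive semidefinite matrices. -/

section Derivative

variable {p q r m : Type*} [Fintype q]

lemma hasDerivWithinAt_mul_apply {𝕜 A : Type*} [NontriviallyNormedField 𝕜] [NormedRing A]
    [NormedAlgebra 𝕜 A] {F : 𝕜 → Matrix p q A} {F' : Matrix p q A} {G : 𝕜 → Matrix q r A}
    {G' : Matrix q r A} {s : Set 𝕜} {x : 𝕜}
    (hF : ∀ i j, HasDerivWithinAt (fun t => F t i j) (F' i j) s x)
    (hG : ∀ i j, HasDerivWithinAt (fun t => G t i j) (G' i j) s x) (i : p) (j : r) :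
    HasDerivWithinAt (fun t => (F t * G t) i j) ((F' * G x + F x * G') i j) s x := by
  simp only [mul_apply, Matrix.add_apply, ← Finset.sum_add_distrib]
  exact HasDerivWithinAt.fun_sum fun k _ => (hF i k).mul (hG k j)

lemma hasDerivWithinAt_conjTranspose_mul_mul_apply {A : Type*} [NormedRing A] [NormedAlgebra ℝ A]
    [StarRing A] [StarModule ℝ A] [ContinuousStar A] [Fintype p] (J : Matrix p q A)
    {Z : ℝ → Matrix p r A} {Z' : Matrix p r A} {Y : ℝ → Matrix q m A} {Y' : Matrix q m A}
    {s : Set ℝ} {x : ℝ} (hZ : ∀ i j, HasDerivWithinAt (fun t => Z t i j) (Z' i j) s x)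
    (hY : ∀ i j, HasDerivWithinAt (fun t => Y t i j) (Y' i j) s x) (i : r) (j : m) :
    HasDerivWithinAt (fun t => ((Z t)ᴴ * J * Y t) i j)
      ((Z'ᴴ * J * Y x + (Z x)ᴴ * J * Y') i j) s x := by
  have hZJ : ∀ i j, HasDerivWithinAt (fun t => ((Z t)ᴴ * J) i j) ((Z'ᴴ * J) i j) s x := by
    intro i j
    simpa only [Matrix.mul_zero, add_zero] using
      hasDerivWithinAt_mul_apply (F := fun t => (Z t)ᴴ) (F' := Z'ᴴ) (G' := 0)
        (fun i j => (hZ j i).star) (fun k l => hasDerivWithinAt_const x s (J k l)) i j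
  exact hasDerivWithinAt_mul_apply hZJ hY i j

end Derivative

lemma hamiltonian_lagrange_identity {R p q r : Type*} [Ring R] [StarRing R] [Fintype p]
    {J B : Matrix p p R} {Z Z' : Matrix p q R} {Y Y' F : Matrix p r R}
    (hJ : Jᴴ = -J) (hB : B.IsHermitian) (hZ : J * Z' = B * Z) (hY : J * Y' = F + B * Y) :
    Z'ᴴ * J * Y + Zᴴ * J * Y' = Zᴴ * F := by
  have hZJ : Z'ᴴ * J = -(Zᴴ * B) := by
    rw [← neg_eq_iff_eq_neg, ← Matrix.mul_neg, ← hJ, ← conjTranspose_mul, hZ, conjTranspose_mul,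
      hB.eq]
  calc Z'ᴴ * J * Y + Zᴴ * J * Y'
      = -(Zᴴ * B) * Y + Zᴴ * (F + B * Y) := by rw [hZJ, Matrix.mul_assoc Zᴴ J, hY]
    _ = Zᴴ * F := by
      rw [Matrix.mul_add, Matrix.neg_mul, Matrix.mul_assoc Zᴴ B, neg_add_cancel_comm_assoc]

lemma eq_add_intervalIntegral_of_hasDerivWithinAt_Icc {E : Type*} [NormedAddCommGroup E]
    [NormedSpace ℝ E] [CompleteSpace E] {f f' : ℝ → E} {a b x : ℝ} (hx : x ∈ Set.Icc a b)
    (hf : ∀ t ∈ Set.Icc a b, HasDerivWithinAt f (f' t) (Set.Icc a b) t)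
    (hf' : IntervalIntegrable f' volume a x) : f x = f a + ∫ t in a..x, f' t := by
  have hcont : ContinuousOn f (Set.Icc a b) := fun t ht => (hf t ht).continuousWithinAt
  have hderiv : ∀ t ∈ Set.Ioo a x, HasDerivAt f (f' t) t := fun t ht =>
    (hf t ⟨ht.1.le, ht.2.le.trans hx.2⟩).hasDerivAt (Icc_mem_nhds ht.1 (ht.2.trans_le hx.2))
  rw [intervalIntegral.integral_eq_sub_of_hasDerivAt_of_le hx.1
    (hcont.mono (Set.Icc_subset_Icc_right hx.2)) hderiv hf', add_sub_cancel]

section EntrywiseIntegral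

variable {a b : ℝ} {μ : Measure ℝ}

lemma intervalIntegrable_mul_mul_apply {A p q r m : Type*} [NormedRing A] [Fintype q] [Fintype r]
    {F : ℝ → Matrix p q A} {M : ℝ → Matrix q r A} {G : ℝ → Matrix r m A}
    (hF : ∀ i j, ContinuousOn (fun x => F x i j) (Set.uIcc a b))
    (hM : ∀ i j, IntervalIntegrable (fun x => M x i j) μ a b)
    (hG : ∀ i j, ContinuousOn (fun x => G x i j) (Set.uIcc a b)) (i : p) (j : m) :
    IntervalIntegrable (fun x => (F x * M x * G x) i j) μ a b := by
  simpa only [mul_apply, Finset.sum_mul, Finset.sum_fn] using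
    IntervalIntegrable.sum Finset.univ fun l _ => .sum Finset.univ fun k _ =>
      ((hM k l).continuousOn_mul (hF i k)).mul_continuousOn (hG l j)

variable {𝕜 q : Type*} [RCLike 𝕜] {M : ℝ → Matrix q q 𝕜}

lemma isHermitian_intervalIntegral (hM : ∀ x ∈ Set.uIcc a b, (M x).IsHermitian) :
    (of fun i j => ∫ x in a..b, M x i j ∂μ).IsHermitian := by
  refine IsHermitian.ext fun i j => ?_
  calc star (∫ x in a..b, M x j i ∂μ)
      = ∫ x in a..b, star (M x j i) ∂μ := intervalIntegral.intervalIntegral_conj.symm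
    _ = ∫ x in a..b, M x i j ∂μ :=
      intervalIntegral.integral_congr fun x hx => (hM x hx).apply i j

lemma posSemidef_intervalIntegral (hab : a ≤ b)
    (hint : ∀ i j, IntervalIntegrable (fun x => M x i j) μ a b)
    (hM : ∀ x ∈ Set.Icc a b, (M x).PosSemidef) :
    (of fun i j => ∫ x in a..b, M x i j ∂μ).PosSemidef := by
  refine ⟨isHermitian_intervalIntegral fun x hx => (hM x (Set.uIcc_of_le hab ▸ hx)).1,
    fun v => ?_⟩
  have hterm : ∀ i j, IntervalIntegrable (fun x => star (v i) * M x i j * v j) μ a b :=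
    fun i j => ((hint i j).const_mul _).mul_const _
  have hform : (v.sum fun i vi => v.sum fun j vj => star vi * (∫ x in a..b, M x i j ∂μ) * vj)
      = ∫ x in a..b, (v.sum fun i vi => v.sum fun j vj => star vi * M x i j * vj) ∂μ := by
    simp only [Finsupp.sum]
    rw [intervalIntegral.integral_finsetSum fun i _ => by
      simpa only [Finset.sum_fn] using IntervalIntegrable.sum v.support fun j _ => hterm i j]
    refine Finset.sum_congr rfl fun i _ => ?_
    simp only [intervalIntegral.integral_finsetSum fun j _ => hterm i j,
      intervalIntegral.integral_mul_const, intervalIntegral.integral_const_mul]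
  simp only [of_apply]
  rw [hform, intervalIntegral.integral_of_le hab]
  refine integral_nonneg_of_ae ?_
  filter_upwards [ae_restrict_mem measurableSet_Ioc] with x hx
  exact (hM x (Set.Ioc_subset_Icc_self hx)).2 v

end EntrywiseIntegral

lemma conjTranspose_symJ (n : ℕ) : (symJ n)ᴴ = -symJ n := by
  simp [symJ, fromBlocks_conjTranspose, fromBlocks_neg]

theorem monotonicity_identity_general {𝕜 p q : Type*} [RCLike 𝕜] [Fintype p] [Finite q]
    {J : Matrix p p 𝕜} (hJ : Jᴴ = -J) {a d : ℝ} {B B₁ : ℝ → Matrix p p 𝕜}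
    {X Y X' Y' : ℝ → Matrix p q 𝕜}
    (hB₁ : ∀ i j, IntervalIntegrable (fun x => B₁ x i j) volume a d)
    (hB : ∀ x ∈ Set.Icc a d, (B x).IsHermitian)
    (hX : ∀ x ∈ Set.Icc a d, ∀ i j,
      HasDerivWithinAt (fun t => X t i j) (X' x i j) (Set.Icc a d) x)
    (hY : ∀ x ∈ Set.Icc a d, ∀ i j,
      HasDerivWithinAt (fun t => Y t i j) (Y' x i j) (Set.Icc a d) x)
    (hodeX : ∀ x ∈ Set.Icc a d, J * X' x = B x * X x)
    (hodeY : ∀ x ∈ Set.Icc a d, J * Y' x = B₁ x * X x + B x * Y x) :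
    (∀ x ∈ Set.Icc a d, ∀ i j,
        ((X x)ᴴ * J * Y x) i j
          = ((X a)ᴴ * J * Y a) i j + ∫ ξ in a..x, ((X ξ)ᴴ * B₁ ξ * X ξ) i j)
    ∧ (∀ x ∈ Set.Icc a d, ∀ i j,
        HasDerivWithinAt (fun t => ((X t)ᴴ * J * Y t) i j)
          (((X x)ᴴ * B₁ x * X x) i j) (Set.Icc a d) x)
    ∧ ((∀ x ∈ Set.Icc a d, (B₁ x).IsHermitian) → ∀ x ∈ Set.Icc a d,
        ((X x)ᴴ * J * Y x - (X a)ᴴ * J * Y a).IsHermitian)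
    ∧ ((∀ x ∈ Set.Icc a d, (B₁ x).PosSemidef) → ∀ x ∈ Set.Icc a d,
        ((X x)ᴴ * J * Y x - (X a)ᴴ * J * Y a).PosSemidef) := by
  have hsub : ∀ x ∈ Set.Icc a d, Set.Icc a x ⊆ Set.Icc a d := fun x hx =>
    Set.Icc_subset_Icc_right hx.2
  have hint : ∀ x ∈ Set.Icc a d, ∀ i j,
      IntervalIntegrable (fun ξ => ((X ξ)ᴴ * B₁ ξ * X ξ) i j) volume a x := by
    intro x hx
    have hXx : ∀ i j, ContinuousOn (fun ξ => X ξ i j) (Set.uIcc a x) := by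
      rw [Set.uIcc_of_le hx.1]
      exact fun i j ξ hξ => ((hX ξ (hsub x hx hξ) i j).mono (hsub x hx)).continuousWithinAt
    have hB₁x : ∀ i j, IntervalIntegrable (fun ξ => B₁ ξ i j) volume a x := fun i j =>
      (hB₁ i j).mono_set (Set.uIcc_subset_uIcc_left (Set.Icc_subset_uIcc hx))
    exact intervalIntegrable_mul_mul_apply (fun i j => (hXx j i).star) hB₁x hXx
  have hderiv : ∀ x ∈ Set.Icc a d, ∀ i j,
      HasDerivWithinAt (fun t => ((X t)ᴴ * J * Y t) i j)
        (((X x)ᴴ * B₁ x * X x) i j) (Set.Icc a d) x := fun x hx i j => by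
    rw [Matrix.mul_assoc, ← hamiltonian_lagrange_identity hJ (hB x hx) (hodeX x hx) (hodeY x hx)]
    exact hasDerivWithinAt_conjTranspose_mul_mul_apply J (hX x hx) (hY x hx) i j
  have hftc : ∀ x ∈ Set.Icc a d, ∀ i j, ((X x)ᴴ * J * Y x) i j
      = ((X a)ᴴ * J * Y a) i j + ∫ ξ in a..x, ((X ξ)ᴴ * B₁ ξ * X ξ) i j := fun x hx i j =>
    eq_add_intervalIntegral_of_hasDerivWithinAt_Icc hx (fun ξ hξ => hderiv ξ hξ i j)
      (hint x hx i j)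
  have hdiff : ∀ x ∈ Set.Icc a d, (X x)ᴴ * J * Y x - (X a)ᴴ * J * Y a
      = of fun i j => ∫ ξ in a..x, ((X ξ)ᴴ * B₁ ξ * X ξ) i j := fun x hx =>
    Matrix.ext fun i j => sub_eq_of_eq_add' (hftc x hx i j)
  refine ⟨hftc, hderiv, fun hB₁herm x hx => ?_, fun hB₁pos x hx => ?_⟩
  · rw [hdiff x hx]
    exact isHermitian_intervalIntegral fun ξ hξ => isHermitian_conjTranspose_mul_mul (X ξ)
      (hB₁herm ξ (hsub x hx (Set.uIcc_of_le hx.1 ▸ hξ)))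
  · rw [hdiff x hx]
    exact posSemidef_intervalIntegral hx.1 (hint x hx) fun ξ hξ =>
      (hB₁pos ξ (hsub x hx hξ)).conjTranspose_mul_mul_same (X ξ)

/-- If `J X' = B X` and `J Y' = B₁ X + B Y` on `[a,d]` (so `Y` plays the role of `∂_λ X`
and `B₁` of `∂_λ B`), then `X* J Y` evolves by `X(x)* J Y(x) = X(a)* J Y(a) + ∫_a^x X* B₁ X`;
in particular its derivative is `X* B₁ X`, Hermiticity at `a` propagates, and if `B₁` is
positive semidefinite then `X(x)* J Y(x) − X(a)* J Y(a)` is positive semidefinite. -/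
theorem monotonicity_identity
    (n m : ℕ) (hn : 1 ≤ n) (hm : 1 ≤ m) (a d : ℝ) (had : a < d)
    (B B₁ : ℝ → Matrix (Fin n ⊕ Fin n) (Fin n ⊕ Fin n) ℂ)
    (X Y X' Y' : ℝ → Matrix (Fin n ⊕ Fin n) (Fin m) ℂ)
    (hBcont : ∀ i j, ContinuousOn (fun x => B x i j) (Set.Icc a d))
    (hB₁cont : ∀ i j, ContinuousOn (fun x => B₁ x i j) (Set.Icc a d))
    (hBherm : ∀ x ∈ Set.Icc a d, (B x).IsHermitian)
    (hB₁herm : ∀ x ∈ Set.Icc a d, (B₁ x).IsHermitian)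
    (hX : ∀ x ∈ Set.Icc a d, ∀ i j,
      HasDerivWithinAt (fun t => X t i j) (X' x i j) (Set.Icc a d) x)
    (hX'cont : ∀ i j, ContinuousOn (fun x => X' x i j) (Set.Icc a d))
    (hY : ∀ x ∈ Set.Icc a d, ∀ i j,
      HasDerivWithinAt (fun t => Y t i j) (Y' x i j) (Set.Icc a d) x)
    (hY'cont : ∀ i j, ContinuousOn (fun x => Y' x i j) (Set.Icc a d))
    (hodeX : ∀ x ∈ Set.Icc a d, symJ n * X' x = B x * X x)
    (hodeY : ∀ x ∈ Set.Icc a d, symJ n * Y' x = B₁ x * X x + B x * Y x) :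
    (∀ x ∈ Set.Icc a d, ∀ i j,
        ((X x)ᴴ * symJ n * Y x) i j
          = ((X a)ᴴ * symJ n * Y a) i j + ∫ ξ in a..x, ((X ξ)ᴴ * B₁ ξ * X ξ) i j)
    ∧ (∀ x ∈ Set.Icc a d, ∀ i j,
        HasDerivWithinAt (fun t => ((X t)ᴴ * symJ n * Y t) i j)
          (((X x)ᴴ * B₁ x * X x) i j) (Set.Icc a d) x)
    ∧ (((X a)ᴴ * symJ n * Y a).IsHermitian →
        ∀ x ∈ Set.Icc a d, ((X x)ᴴ * symJ n * Y x).IsHermitian)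
    ∧ (((X a)ᴴ * symJ n * Y a).IsHermitian → (∀ x ∈ Set.Icc a d, (B₁ x).PosSemidef) →
        ∀ x ∈ Set.Icc a d,
          ((X x)ᴴ * symJ n * Y x - (X a)ᴴ * symJ n * Y a).PosSemidef) := by
  obtain ⟨hftc, hderiv, hherm, hpos⟩ := monotonicity_identity_general (conjTranspose_symJ n)
    (fun i j => (hB₁cont i j).intervalIntegrable_of_Icc had.le) hBherm hX hY hodeX hodeY
  exact ⟨hftc, hderiv, fun ha x hx => by simpa using (hherm hB₁herm x hx).add ha, fun _ => hpos⟩
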